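/- Fixed-α posterior second-moment bounds: let γ be the standard Cauchy or standard Laplace density. There exists C > 0 such that for any real x and any α ∈ [0,1/2]: (i) r_2(α,0,x) ≤ C·[1 ∧ (α/(1−α))·(g/φ)(x)]·(1+x²); (ii) for any real μ, r_2(α,μ,x) ≤ (1−a(x))·μ² + C·a(x)·((x−μ)²+1). If moreover γ is the standard Cauchy density, then for X ~ N(0,1), E_0[r_2(α,0,X)] ≤ C·τ(α)·α, and for X ~ N(μ,1) with any real μ, E_μ[r_2(α,μ,X)] ≤ C·(1 + τ̃(α)²). -/

import Mathlib

/-!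
Statement 5: fixed-α bounds on the posterior second moment `r₂(α, μ, x)`
for spike and slab priors with Cauchy or Laplace slab.
-/

open MeasureTheory Real Set

noncomputable section

/-- Standard normal density. -/
def phi (x : ℝ) : ℝ := Real.exp (-x ^ 2 / 2) / Real.sqrt (2 * Real.pi)

/-- Standard Laplace density. -/
def lapDen (x : ℝ) : ℝ := Real.exp (-|x|) / 2

/-- Standard Cauchy density. -/
def cauchyDen (x : ℝ) : ℝ := (Real.pi * (1 + x ^ 2))⁻¹

/-- Convolution `g = φ * γ`. -/
def conv (γ : ℝ → ℝ) (x : ℝ) : ℝ := ∫ u, phi (x - u) * γ u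

/-- Posterior weight `a(x) = α g(x) / ((1-α) φ(x) + α g(x))`. -/
def aWt (γ : ℝ → ℝ) (α x : ℝ) : ℝ :=
  α * conv γ x / ((1 - α) * phi x + α * conv γ x)

/-- Density of the single-coordinate posterior with respect to `volume + δ₀`:
the point mass `1 - a(x)` at `0`, and the continuous part `a(x) γ_x`. -/
def coordDen (γ : ℝ → ℝ) (α x u : ℝ) : ℝ :=
  if u = 0 then 1 - aWt γ α x else aWt γ α x * (phi (x - u) * γ u / conv γ x)

/-- Single-coordinate posterior `π_α(⋅|x) = (1 - a(x)) δ₀ + a(x) γ_x`. -/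
def coordPost (γ : ℝ → ℝ) (α x : ℝ) : Measure ℝ :=
  (volume + Measure.dirac (0 : ℝ)).withDensity fun u => ENNReal.ofReal (coordDen γ α x u)

/-- Posterior second moment `r₂(α, μ, x) = ∫ (u - μ)² dπ_α(u|x)`. -/
def r2 (γ : ℝ → ℝ) (α μ x : ℝ) : ℝ := ∫ u, (u - μ) ^ 2 ∂(coordPost γ α x)

/-- exponential comparability -/
def Good (γ : ℝ → ℝ) : Prop :=
  Continuous γ ∧ (∀ x, 0 < γ x) ∧ ∀ x u, γ u ≤ 4 * Real.exp |x - u| * γ x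

lemma one_add_sq_le_exp (v : ℝ) : 1 + v ^ 2 ≤ 2 * Real.exp |v| := by
  have := Real.quadratic_le_exp_of_nonneg (abs_nonneg v)
  rw [sq_abs] at this
  nlinarith [abs_nonneg v]

lemma good_cauchy : Good cauchyDen := by
  have hp : ∀ x : ℝ, 0 < Real.pi * (1 + x ^ 2) := fun x => by positivity
  refine ⟨?_, fun x => inv_pos.2 (hp x), fun x u => ?_⟩
  · unfold cauchyDen
    exact Continuous.inv₀ (by fun_prop) (fun x => (hp x).ne')
  · unfold cauchyDen
    rw [← div_eq_mul_inv, inv_le_iff_one_le_mul₀ (hp u), div_mul_eq_mul_div, le_div_iff₀ (hp x)]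
    have h1 := one_add_sq_le_exp (x - u)
    have h2 : 1 + x ^ 2 ≤ 2 * (1 + (x - u) ^ 2) * (1 + u ^ 2) := by
      nlinarith [sq_nonneg (x - 2 * u), sq_nonneg ((x - u) * u)]
    have h3 : 1 + x ^ 2 ≤ 4 * Real.exp |x - u| * (1 + u ^ 2) := by
      refine h2.trans ?_
      have : 0 ≤ 1 + u ^ 2 := by positivity
      nlinarith
    have := Real.pi_pos
    nlinarith

lemma good_lap : Good lapDen := by
  refine ⟨?_, fun x => ?_, fun x u => ?_⟩
  · unfold lapDen
    fun_prop
  · unfold lapDen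
    positivity
  · unfold lapDen
    have h : Real.exp (-|u|) ≤ Real.exp |x - u| * Real.exp (-|x|) := by
      rw [← Real.exp_add]
      apply Real.exp_le_exp.2
      have := abs_sub_abs_le_abs_sub x u
      linarith
    have : 0 < Real.exp (-|u|) := Real.exp_pos _
    linarith

lemma phi_pos (x : ℝ) : 0 < phi x := by unfold phi; positivity

lemma phi_cont : Continuous phi := by unfold phi; fun_prop

lemma phi_le (x : ℝ) : phi x ≤ Real.exp (-x ^ 2 / 2) := by
  unfold phi
  apply div_le_self (Real.exp_pos _).le
  rw [Real.one_le_sqrt]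
  linarith [Real.pi_gt_three]

/-- The dominating function. -/
def dom (v : ℝ) : ℝ := 100 * Real.exp (-(1 / 8) * v ^ 2)

lemma dom_int : Integrable dom := by
  unfold dom
  exact (integrable_exp_neg_mul_sq (by norm_num)).const_mul _

lemma dom_bound (v : ℝ) : (1 + v ^ 2) * phi v * (4 * Real.exp |v|) ≤ dom v := by
  have h1 : 1 + v ^ 2 ≤ 8 * Real.exp (v ^ 2 / 8) := by
    have := Real.add_one_le_exp (v ^ 2 / 8)
    linarith
  have h2 : Real.exp |v| ≤ Real.exp 1 * Real.exp (v ^ 2 / 4) := by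
    rw [← Real.exp_add]
    apply Real.exp_le_exp.2
    nlinarith [sq_abs v, sq_nonneg (|v| - 2)]
  have h3 := phi_le v
  have e1 : Real.exp 1 < 3 := lt_trans Real.exp_one_lt_d9 (by norm_num)
  calc (1 + v ^ 2) * phi v * (4 * Real.exp |v|)
      ≤ (8 * Real.exp (v ^ 2 / 8)) * Real.exp (-v ^ 2 / 2) *
          (4 * (3 * Real.exp (v ^ 2 / 4))) := by
        have := phi_pos v
        have h2' : Real.exp |v| ≤ 3 * Real.exp (v ^ 2 / 4) := h2.trans (by gcongr)
        gcongr
    _ = 96 * (Real.exp (v ^ 2 / 8) * Real.exp (-v ^ 2 / 2) * Real.exp (v ^ 2 / 4)) := by ring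
    _ = 96 * Real.exp (-(1 / 8) * v ^ 2) := by
        rw [← Real.exp_add, ← Real.exp_add]; congr 2; ring
    _ ≤ dom v := by
        unfold dom
        have := Real.exp_pos (-(1 / 8) * v ^ 2)
        linarith

/-- upper constant -/
def cD : ℝ := ∫ v, dom v

/-- lower constant -/
def cL : ℝ := ∫ v, phi v / (4 * Real.exp |v|)

lemma low_int : Integrable (fun v => phi v / (4 * Real.exp |v|)) := by
  refine dom_int.mono' ?_ (Filter.Eventually.of_forall fun v => ?_)
  · refine Continuous.aestronglyMeasurable ?_
    have := phi_cont
    exact Continuous.div this (by fun_prop) (fun v => by positivity)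
  · have hp := phi_pos v
    have he : 1 ≤ Real.exp |v| := Real.one_le_exp (abs_nonneg v)
    rw [Real.norm_of_nonneg (by positivity)]
    refine le_trans ?_ (dom_bound v)
    calc phi v / (4 * Real.exp |v|) ≤ phi v := div_le_self hp.le (by linarith)
      _ = 1 * phi v * 1 := by ring
      _ ≤ _ := by
        gcongr
        · nlinarith [sq_nonneg v]
        · linarith

lemma cL_pos : 0 < cL := by
  have hp : ∀ v, 0 < phi v / (4 * Real.exp |v|) := fun v => by
    have := phi_pos v
    positivity
  unfold cL
  rw [integral_pos_iff_support_of_nonneg (fun v => (hp v).le) low_int]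
  have : Function.support (fun v => phi v / (4 * Real.exp |v|)) = Set.univ := by
    ext v
    simp [(phi_pos v).ne']
  rw [this]
  simp

lemma cD_nonneg : 0 ≤ cD := by
  unfold cD
  apply integral_nonneg
  intro v
  unfold dom
  positivity

lemma core_bound {γ : ℝ → ℝ} (hγ : Good γ) (x u : ℝ) :
    (1 + (x - u) ^ 2) * (phi (x - u) * γ u) ≤ γ x * dom (x - u) := by
  have h1 := dom_bound (x - u)
  have h2 := hγ.2.2 x u
  have h3 := hγ.2.1 x
  have h4 := phi_pos (x - u)
  calc _ ≤ (1 + (x - u) ^ 2) * (phi (x - u) * (4 * Real.exp |x - u| * γ x)) := by gcongr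
    _ = γ x * ((1 + (x - u) ^ 2) * phi (x - u) * (4 * Real.exp |x - u|)) := by ring
    _ ≤ _ := by gcongr

lemma core_int {γ : ℝ → ℝ} (hγ : Good γ) (x : ℝ) :
    Integrable (fun u => (1 + (x - u) ^ 2) * (phi (x - u) * γ u)) := by
  refine ((dom_int.comp_sub_left x).const_mul (γ x)).mono' ?_
    (Filter.Eventually.of_forall fun u => ?_)
  · have := phi_cont
    have := hγ.1
    exact Continuous.aestronglyMeasurable (by fun_prop)
  · have h1 := phi_pos (x - u)
    have h2 := hγ.2.1 u
    rw [Real.norm_of_nonneg (by positivity)]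
    exact core_bound hγ x u

lemma core_le {γ : ℝ → ℝ} (hγ : Good γ) (x : ℝ) :
    ∫ u, (1 + (x - u) ^ 2) * (phi (x - u) * γ u) ≤ γ x * cD := by
  calc _ ≤ ∫ u, γ x * dom (x - u) :=
        integral_mono (core_int hγ x) ((dom_int.comp_sub_left x).const_mul (γ x)) (core_bound hγ x)
    _ = _ := by
      rw [integral_const_mul, integral_sub_left_eq_self (fun v => dom v) volume x]
      rfl

lemma conv_int {γ : ℝ → ℝ} (hγ : Good γ) (x : ℝ) :
    Integrable (fun u => phi (x - u) * γ u) := by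
  refine (core_int hγ x).mono' ?_ (Filter.Eventually.of_forall fun u => ?_)
  · have := phi_cont
    have := hγ.1
    exact Continuous.aestronglyMeasurable (by fun_prop)
  · have h1 := phi_pos (x - u)
    have h2 := hγ.2.1 u
    have h3 : 0 < phi (x - u) * γ u := by positivity
    rw [Real.norm_of_nonneg h3.le]
    nlinarith [mul_nonneg (sq_nonneg (x - u)) h3.le]

lemma conv_le {γ : ℝ → ℝ} (hγ : Good γ) (x : ℝ) : conv γ x ≤ γ x * cD := by
  refine le_trans ?_ (core_le hγ x)
  refine integral_mono (conv_int hγ x) (core_int hγ x) (fun u => ?_)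
  have h1 := phi_pos (x - u)
  have h2 := hγ.2.1 u
  have h3 : 0 < phi (x - u) * γ u := by positivity
  show phi (x - u) * γ u ≤ (1 + (x - u) ^ 2) * (phi (x - u) * γ u)
  nlinarith [mul_nonneg (sq_nonneg (x - u)) h3.le]

lemma le_conv {γ : ℝ → ℝ} (hγ : Good γ) (x : ℝ) : γ x * cL ≤ conv γ x := by
  have e : γ x * cL = ∫ u, γ x * (phi (x - u) / (4 * Real.exp |x - u|)) := by
    rw [integral_const_mul,
      integral_sub_left_eq_self (fun v => phi v / (4 * Real.exp |v|)) volume x]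
    rfl
  rw [e]
  refine integral_mono ((low_int.comp_sub_left x).const_mul _) (conv_int hγ x) (fun u => ?_)
  have h1 := phi_pos (x - u)
  have h2 := hγ.2.2 u x
  rw [abs_sub_comm] at h2
  show γ x * (phi (x - u) / (4 * Real.exp |x - u|)) ≤ phi (x - u) * γ u
  rw [← mul_div_assoc, div_le_iff₀ (by positivity)]
  nlinarith

lemma conv_pos {γ : ℝ → ℝ} (hγ : Good γ) (x : ℝ) : 0 < conv γ x :=
  lt_of_lt_of_le (mul_pos (hγ.2.1 x) cL_pos) (le_conv hγ x)

lemma aWt_den_pos {γ : ℝ → ℝ} (hγ : Good γ) {α : ℝ} (h0 : 0 ≤ α) (h1 : α ≤ 1 / 2) (x : ℝ) :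
    0 < (1 - α) * phi x + α * conv γ x := by
  have := phi_pos x
  have := conv_pos hγ x
  have : 0 < 1 - α := by linarith
  positivity

lemma aWt_nonneg {γ : ℝ → ℝ} (hγ : Good γ) {α : ℝ} (h0 : 0 ≤ α) (h1 : α ≤ 1 / 2) (x : ℝ) :
    0 ≤ aWt γ α x :=
  div_nonneg (mul_nonneg h0 (conv_pos hγ x).le) (aWt_den_pos hγ h0 h1 x).le

lemma one_sub_aWt {γ : ℝ → ℝ} (hγ : Good γ) {α : ℝ} (h0 : 0 ≤ α) (h1 : α ≤ 1 / 2) (x : ℝ) :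
    1 - aWt γ α x = (1 - α) * phi x / ((1 - α) * phi x + α * conv γ x) := by
  have := aWt_den_pos hγ h0 h1 x
  unfold aWt
  field_simp
  ring

lemma aWt_le_one {γ : ℝ → ℝ} (hγ : Good γ) {α : ℝ} (h0 : 0 ≤ α) (h1 : α ≤ 1 / 2) (x : ℝ) :
    aWt γ α x ≤ 1 := by
  have h : 0 ≤ 1 - aWt γ α x := by
    rw [one_sub_aWt hγ h0 h1]
    exact div_nonneg (mul_nonneg (by linarith) (phi_pos x).le) (aWt_den_pos hγ h0 h1 x).le
  linarith

lemma aWt_le {γ : ℝ → ℝ} (hγ : Good γ) {α : ℝ} (h0 : 0 ≤ α) (h1 : α ≤ 1 / 2) (x : ℝ) :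
    aWt γ α x ≤ α / (1 - α) * (conv γ x / phi x) := by
  have hp := phi_pos x
  have hc := conv_pos hγ x
  have ha : 0 < 1 - α := by linarith
  rw [div_mul_div_comm]
  unfold aWt
  gcongr
  have : 0 ≤ α * conv γ x := by positivity
  linarith

lemma sq_int {γ : ℝ → ℝ} (hγ : Good γ) (x μ : ℝ) :
    Integrable (fun u => (u - μ) ^ 2 * (phi (x - u) * γ u)) := by
  refine ((core_int hγ x).const_mul (2 * (1 + (x - μ) ^ 2))).mono' ?_
    (Filter.Eventually.of_forall fun u => ?_)
  · have := phi_cont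
    have := hγ.1
    exact Continuous.aestronglyMeasurable (by fun_prop)
  · have h1 := phi_pos (x - u)
    have h2 := hγ.2.1 u
    rw [Real.norm_of_nonneg (by positivity), ← mul_assoc (2 * (1 + (x - μ) ^ 2))]
    gcongr
    nlinarith [sq_nonneg ((x - μ) * (x - u)), sq_nonneg (x - u + (x - μ))]

lemma sec_mom_le {γ : ℝ → ℝ} (hγ : Good γ) (x μ : ℝ) :
    ∫ u, (u - μ) ^ 2 * (phi (x - u) * γ u) ≤
      (2 * (cD / cL) + 2) * ((x - μ) ^ 2 + 1) * conv γ x := by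
  have h : ∫ u, (u - μ) ^ 2 * (phi (x - u) * γ u) ≤
      ∫ u, (2 * ((1 + (x - u) ^ 2) * (phi (x - u) * γ u)) +
        2 * (x - μ) ^ 2 * (phi (x - u) * γ u)) := by
    refine integral_mono (sq_int hγ x μ)
      (((core_int hγ x).const_mul _).add ((conv_int hγ x).const_mul _)) (fun u => ?_)
    have h1 := phi_pos (x - u)
    have h2 := hγ.2.1 u
    have h3 : 0 < phi (x - u) * γ u := by positivity
    show (u - μ) ^ 2 * (phi (x - u) * γ u) ≤ 2 * ((1 + (x - u) ^ 2) * (phi (x - u) * γ u)) +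
        2 * (x - μ) ^ 2 * (phi (x - u) * γ u)
    have : (u - μ) ^ 2 ≤ 2 * (1 + (x - u) ^ 2) + 2 * (x - μ) ^ 2 := by
      nlinarith [sq_nonneg (x - u + (x - μ))]
    nlinarith
  rw [integral_add ((core_int hγ x).const_mul _) ((conv_int hγ x).const_mul _),
    integral_const_mul, integral_const_mul] at h
  change _ ≤ _ + _ * conv γ x at h
  have h2 : γ x * cD ≤ cD / cL * conv γ x := by
    rw [div_mul_eq_mul_div, le_div_iff₀ cL_pos]
    have := mul_le_mul_of_nonneg_left (le_conv hγ x) cD_nonneg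
    linarith
  have h3 := core_le hγ x
  have h4 : 0 ≤ cD / cL * conv γ x :=
    mul_nonneg (div_nonneg cD_nonneg cL_pos.le) (conv_pos hγ x).le
  have h5 := conv_pos hγ x
  have h6 := sq_nonneg (x - μ)
  nlinarith [mul_nonneg h4 h6]

lemma r2_eq {γ : ℝ → ℝ} (hγ : Good γ) {α : ℝ} (h0 : 0 ≤ α) (h1 : α ≤ 1 / 2) (μ x : ℝ) :
    r2 γ α μ x = (1 - aWt γ α x) * μ ^ 2 +
      aWt γ α x / conv γ x * ∫ u, (u - μ) ^ 2 * (phi (x - u) * γ u) := by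
  have ha := aWt_nonneg hγ h0 h1 x
  have ha1 := aWt_le_one hγ h0 h1 x
  have hnn : ∀ u, 0 ≤ coordDen γ α x u := by
    intro u
    unfold coordDen
    split_ifs
    · linarith
    · have h1 := phi_pos (x - u)
      have h2 := hγ.2.1 u
      have h3 := conv_pos hγ x
      positivity
  have hm : Measurable (coordDen γ α x) := by
    unfold coordDen
    refine Measurable.ite (measurableSet_singleton 0) measurable_const ?_
    have := phi_cont.measurable
    have := hγ.1.measurable
    fun_prop
  have hae : (fun u => coordDen γ α x u * (u - μ) ^ 2) =ᵐ[volume]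
      (fun u => aWt γ α x / conv γ x * ((u - μ) ^ 2 * (phi (x - u) * γ u))) := by
    have : ∀ᵐ u : ℝ ∂volume, u ≠ 0 := by
      simp [ae_iff]
    filter_upwards [this] with u hu
    simp only [coordDen, if_neg hu]
    ring
  unfold r2 coordPost
  rw [integral_withDensity_eq_integral_toReal_smul (by fun_prop)
    (Filter.Eventually.of_forall fun u => ENNReal.ofReal_lt_top)]
  simp only [ENNReal.toReal_ofReal (hnn _), smul_eq_mul]
  rw [integral_add_measure, integral_congr_ae hae, integral_const_mul, integral_dirac]
  · simp only [coordDen, if_true]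
    ring
  · exact (((sq_int hγ x μ).const_mul _).congr hae.symm)
  · exact integrable_dirac enorm_lt_top

/-- constant in (ii) -/
def cA : ℝ := 2 * (cD / cL) + 2

lemma cA_pos : 0 < cA := by
  unfold cA
  have := div_nonneg cD_nonneg cL_pos.le
  linarith

lemma r2_le {γ : ℝ → ℝ} (hγ : Good γ) {α : ℝ} (h0 : 0 ≤ α) (h1 : α ≤ 1 / 2) (μ x : ℝ) :
    r2 γ α μ x ≤ (1 - aWt γ α x) * μ ^ 2 + cA * aWt γ α x * ((x - μ) ^ 2 + 1) := by
  rw [r2_eq hγ h0 h1]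
  have hc := conv_pos hγ x
  have := mul_le_mul_of_nonneg_left (sec_mom_le hγ x μ) (div_nonneg (aWt_nonneg hγ h0 h1 x) hc.le)
  have e : aWt γ α x / conv γ x * ((2 * (cD / cL) + 2) * ((x - μ) ^ 2 + 1) * conv γ x) =
      cA * aWt γ α x * ((x - μ) ^ 2 + 1) := by
    unfold cA
    field_simp
  linarith

lemma r2_zero_le {γ : ℝ → ℝ} (hγ : Good γ) {α : ℝ} (h0 : 0 ≤ α) (h1 : α ≤ 1 / 2) (x : ℝ) :
    r2 γ α 0 x ≤ cA * min 1 (α / (1 - α) * (conv γ x / phi x)) * (1 + x ^ 2) := by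
  have h := r2_le hγ h0 h1 0 x
  have h2 : aWt γ α x ≤ min 1 (α / (1 - α) * (conv γ x / phi x)) :=
    le_min (aWt_le_one hγ h0 h1 x) (aWt_le hγ h0 h1 x)
  have hA := cA_pos
  calc _ ≤ _ := h
    _ = cA * aWt γ α x * (1 + x ^ 2) := by ring
    _ ≤ _ := by gcongr

lemma r2_nonneg (γ : ℝ → ℝ) (α μ x : ℝ) : 0 ≤ r2 γ α μ x :=
  integral_nonneg fun _ => sq_nonneg _

lemma cauchy_conv_le (x : ℝ) : conv cauchyDen x * (1 + x ^ 2) ≤ cD := by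
  have h := conv_le good_cauchy x
  unfold cauchyDen at h
  rw [mul_comm, ← div_eq_mul_inv, le_div_iff₀ (by positivity)] at h
  have h2 : 0 < conv cauchyDen x * (1 + x ^ 2) :=
    mul_pos (conv_pos good_cauchy x) (by positivity)
  change conv cauchyDen x * _ ≤ _ at h
  nlinarith [Real.pi_gt_three]

lemma cauchy_le_conv (x : ℝ) : cL ≤ 4 * (conv cauchyDen x * (1 + x ^ 2)) := by
  have h := le_conv good_cauchy x
  unfold cauchyDen at h
  rw [mul_comm, ← div_eq_mul_inv, div_le_iff₀ (by positivity)] at h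
  have h2 : 0 < conv cauchyDen x * (1 + x ^ 2) :=
    mul_pos (conv_pos good_cauchy x) (by positivity)
  change _ ≤ conv cauchyDen x * _ at h
  nlinarith [Real.pi_lt_four]

lemma phi_eq : phi = ProbabilityTheory.gaussianPDFReal 0 1 := by
  ext x
  simp [phi, ProbabilityTheory.gaussianPDFReal, div_eq_inv_mul]

lemma conv_le_inv_pi (x : ℝ) : conv cauchyDen x ≤ 1 / Real.pi := by
  have hi : Integrable phi := by
    rw [phi_eq]; exact ProbabilityTheory.integrable_gaussianPDFReal 0 1
  have h1 : ∫ v, phi v = 1 := by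
    rw [phi_eq]; exact ProbabilityTheory.integral_gaussianPDFReal_eq_one 0 one_ne_zero
  calc conv cauchyDen x ≤ ∫ u, phi (x - u) * (1 / Real.pi) := by
        refine integral_mono (conv_int good_cauchy x) ((hi.comp_sub_left x).mul_const _)
          (fun u => ?_)
        have := phi_pos (x - u)
        show phi (x - u) * cauchyDen u ≤ phi (x - u) * (1 / Real.pi)
        gcongr
        unfold cauchyDen
        rw [← one_div]
        apply one_div_le_one_div_of_le Real.pi_pos
        nlinarith [Real.pi_pos, sq_nonneg u]
    _ = 1 / Real.pi := by
      rw [integral_mul_const, integral_sub_left_eq_self (fun v => phi v) volume x, h1, one_mul]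

/-- lower bound on the threshold -/
lemma tau_lower {t : ℝ} (ht : 0 ≤ t) (h : phi t ≤ conv cauchyDen t) : 1 / 2 ≤ t := by
  by_contra hlt
  push Not at hlt
  have h1 := h.trans (conv_le_inv_pi t)
  unfold phi at h1
  have hs : 0 < Real.sqrt (2 * Real.pi) := by positivity
  rw [div_le_div_iff₀ hs Real.pi_pos, one_mul] at h1
  have h2 := Real.add_one_le_exp (-t ^ 2 / 2)
  have h3 : 7 / 8 ≤ Real.exp (-t ^ 2 / 2) := by nlinarith
  have h4 : 7 / 8 * Real.pi ≤ Real.sqrt (2 * Real.pi) := by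
    have := Real.pi_pos
    nlinarith
  have h5 := Real.sq_sqrt (show 0 ≤ 2 * Real.pi by positivity)
  have h6 := Real.pi_gt_three
  nlinarith

lemma phi_shift {t x : ℝ} (ht : 0 ≤ t) (hx : t ≤ |x|) :
    phi x ≤ phi t * Real.exp (-(|x| - t) ^ 2 / 2) := by
  unfold phi
  rw [div_mul_eq_mul_div, ← Real.exp_add]
  gcongr
  nlinarith [sq_abs x]

lemma one_add_shift (t x : ℝ) :
    1 + x ^ 2 ≤ 2 * ((1 + t ^ 2) * (1 + (|x| - t) ^ 2)) := by
  rw [← sq_abs x]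
  nlinarith [sq_nonneg (|x| - 2 * t), sq_nonneg (t * (|x| - t))]

/-- profile -/
def prof (s : ℝ) : ℝ := (1 + s ^ 2) * Real.exp (-s ^ 2 / 2)

lemma prof_nonneg (s : ℝ) : 0 ≤ prof s := by unfold prof; positivity

lemma prof_le (s : ℝ) : prof s ≤ dom s := by
  unfold prof dom
  have h1 : 1 + s ^ 2 ≤ 8 * Real.exp (s ^ 2 / 8) := by
    have := Real.add_one_le_exp (s ^ 2 / 8)
    linarith
  calc _ ≤ 8 * Real.exp (s ^ 2 / 8) * Real.exp (-s ^ 2 / 2) := by gcongr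
    _ = 8 * Real.exp (s ^ 2 / 8 + -s ^ 2 / 2) := by rw [Real.exp_add]; ring
    _ ≤ 100 * Real.exp (-(1 / 8) * s ^ 2) := by
      gcongr
      · norm_num
      · nlinarith [sq_nonneg s]

lemma sq_prof_le (s : ℝ) : s ^ 2 * prof s ≤ 16 := by
  unfold prof
  have h1 := Real.add_one_le_exp (s ^ 2 / 4)
  have e : Real.exp (-s ^ 2 / 2) * (Real.exp (s ^ 2 / 4) * Real.exp (s ^ 2 / 4)) = 1 := by
    rw [← Real.exp_add, ← Real.exp_add]
    ring_nf
    simp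
  have h2 : (1 + s ^ 2 / 4) * (1 + s ^ 2 / 4) ≤ Real.exp (s ^ 2 / 4) * Real.exp (s ^ 2 / 4) := by
    have : 0 ≤ s ^ 2 := sq_nonneg s
    gcongr <;> linarith
  have h3 : s ^ 2 * (1 + s ^ 2) ≤ 16 * (Real.exp (s ^ 2 / 4) * Real.exp (s ^ 2 / 4)) := by
    nlinarith [sq_nonneg s]
  have := mul_le_mul_of_nonneg_right h3 (Real.exp_pos (-s ^ 2 / 2)).le
  nlinarith

/-- pointwise bound for (iii) -/
lemma phi_r2_le {α t : ℝ} (h0 : 0 < α) (h1 : α ≤ 1 / 2) (ht : 0 ≤ t)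
    (heq : α / (1 - α) * (conv cauchyDen t / phi t) = 1) (x : ℝ) :
    phi x * r2 cauchyDen α 0 x ≤ 4 * cA * cD * α *
      (Set.indicator (Set.Icc (-t) t) (fun _ => (1 : ℝ)) x + dom (x - t) + dom (x + t)) := by
  have hA := cA_pos
  have hD := cD_nonneg
  have hp := phi_pos x
  have hpt := phi_pos t
  have hr := r2_zero_le good_cauchy h0.le h1 x
  have ha : 0 < 1 - α := by linarith
  have hα : α / (1 - α) ≤ 2 * α := by
    rw [div_le_iff₀ ha]; nlinarith
  have hd : ∀ v, 0 ≤ dom v := fun v => by unfold dom; positivity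
  have hK : 0 ≤ 4 * cA * cD * α := by positivity
  have hc := conv_pos good_cauchy x
  by_cases hx : |x| ≤ t
  · have hmem : x ∈ Set.Icc (-t) t := abs_le.1 hx
    rw [Set.indicator_of_mem hmem]
    have h2 : phi x * r2 cauchyDen α 0 x ≤ 2 * cA * α * (conv cauchyDen x * (1 + x ^ 2)) := by
      calc _ ≤ phi x * (cA * (2 * α * (conv cauchyDen x / phi x)) * (1 + x ^ 2)) := by
            gcongr
            refine hr.trans ?_
            gcongr
            exact (min_le_right _ _).trans (by gcongr)
        _ = _ := by field_simp
    have h3 : 2 * cA * α * (conv cauchyDen x * (1 + x ^ 2)) ≤ 2 * cA * α * cD := by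
      have := cauchy_conv_le x
      gcongr
    have h4 : 4 * cA * cD * α * 1 ≤ 4 * cA * cD * α * (1 + dom (x - t) + dom (x + t)) := by
      gcongr
      linarith [hd (x - t), hd (x + t)]
    have : 0 ≤ 2 * cA * α * cD := by positivity
    linarith
  · push Not at hx
    have e : phi t = α / (1 - α) * conv cauchyDen t := by
      have : α / (1 - α) * conv cauchyDen t / phi t = 1 := by rw [mul_div_assoc]; exact heq
      rw [div_eq_one_iff_eq hpt.ne'] at this
      exact this.symm
    have hct := conv_pos good_cauchy t
    have h2 : phi t * (1 + t ^ 2) ≤ 2 * α * cD := by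
      rw [e]
      calc _ ≤ 2 * α * conv cauchyDen t * (1 + t ^ 2) := by gcongr
        _ = 2 * α * (conv cauchyDen t * (1 + t ^ 2)) := by ring
        _ ≤ _ := by
          have := cauchy_conv_le t
          gcongr
    have h3 : phi x * r2 cauchyDen α 0 x ≤ 4 * cA * cD * α * prof (|x| - t) := by
      calc _ ≤ phi x * (cA * 1 * (1 + x ^ 2)) := by
            gcongr
            refine hr.trans ?_
            gcongr
            exact min_le_left _ _
        _ ≤ (phi t * Real.exp (-(|x| - t) ^ 2 / 2)) *
              (cA * 1 * (2 * ((1 + t ^ 2) * (1 + (|x| - t) ^ 2)))) := by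
            have := phi_shift ht hx.le
            have := one_add_shift t x
            gcongr
        _ = 2 * cA * prof (|x| - t) * (phi t * (1 + t ^ 2)) := by unfold prof; ring
        _ ≤ 2 * cA * prof (|x| - t) * (2 * α * cD) := by
            have := prof_nonneg (|x| - t)
            gcongr
        _ = _ := by ring
    refine h3.trans ?_
    gcongr
    have h4 := prof_le (|x| - t)
    have h5 : dom (|x| - t) ≤ dom (x - t) + dom (x + t) := by
      rcases abs_cases x with ⟨h, _⟩ | ⟨h, _⟩
      · rw [h]; linarith [hd (x + t)]
      · have : dom (|x| - t) = dom (x + t) := by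
          rw [h]; unfold dom; ring_nf
        linarith [hd (x - t)]
    have h6 : 0 ≤ Set.indicator (Set.Icc (-t) t) (fun _ => (1 : ℝ)) x :=
      Set.indicator_nonneg (fun _ _ => zero_le_one) x
    linarith

lemma part3 {α t : ℝ} (h0 : 0 < α) (h1 : α ≤ 1 / 2) (ht : 0 ≤ t)
    (heq : α / (1 - α) * (conv cauchyDen t / phi t) = 1) :
    (∫ x, r2 cauchyDen α 0 x ∂(ProbabilityTheory.gaussianReal 0 1)) ≤
      4 * cA * cD * (2 + 4 * cD) * t * α := by
  have hA := cA_pos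
  have hD := cD_nonneg
  have hpt := phi_pos t
  have hct := conv_pos good_cauchy t
  have ha : 0 < 1 - α := by linarith
  have hlow : 1 / 2 ≤ t := by
    apply tau_lower ht
    have e : α / (1 - α) * conv cauchyDen t / phi t = 1 := by rw [mul_div_assoc]; exact heq
    rw [div_eq_one_iff_eq hpt.ne'] at e
    rw [← e]
    have : α / (1 - α) ≤ 1 := by rw [div_le_one ha]; linarith
    nlinarith
  rw [ProbabilityTheory.integral_gaussianReal_eq_integral_smul one_ne_zero, ← phi_eq]
  simp only [smul_eq_mul]
  have hi1 : Integrable (Set.indicator (Set.Icc (-t) t) (fun _ => (1 : ℝ))) := by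
    rw [integrable_indicator_iff measurableSet_Icc]
    exact integrableOn_const (by simp)
  have hi2 : Integrable (fun x => dom (x - t)) := dom_int.comp_sub_right t
  have hi3 : Integrable (fun x => dom (x + t)) := dom_int.comp_add_right t
  have hi12 : Integrable (fun x => Set.indicator (Set.Icc (-t) t) (fun _ => (1 : ℝ)) x +
      dom (x - t)) := hi1.add hi2
  calc _ ≤ ∫ x, 4 * cA * cD * α *
      (Set.indicator (Set.Icc (-t) t) (fun _ => (1 : ℝ)) x + dom (x - t) + dom (x + t)) :=
        integral_mono_of_nonneg
          (Filter.Eventually.of_forall fun x => mul_nonneg (phi_pos x).le (r2_nonneg _ _ _ _))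
          ((hi12.add hi3).const_mul _)
          (Filter.Eventually.of_forall fun x => phi_r2_le h0 h1 ht heq x)
    _ = 4 * cA * cD * α * (2 * t + cD + cD) := by
      rw [integral_const_mul, integral_add hi12 hi3, integral_add hi1 hi2,
        integral_sub_right_eq_self (fun v => dom v) t,
        integral_add_right_eq_self (fun v => dom v) t,
        integral_indicator measurableSet_Icc]
      congr 3
      rw [setIntegral_const]
      simp [Real.volume_real_Icc, max_eq_left (show 0 ≤ t + t by linarith)]
      ring
    _ ≤ 4 * cA * cD * α * (2 * t + 4 * cD * t) := by
      have : 2 * t + cD + cD ≤ 2 * t + 4 * cD * t := by nlinarith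
      gcongr
    _ = _ := by ring

/-- constant for the pointwise bound in (iv) -/
def cE : ℝ := 8 * (cD / cL)

lemma cE_nonneg : 0 ≤ cE := by
  unfold cE
  have := div_nonneg cD_nonneg cL_pos.le
  linarith

/-- pointwise bound for (iv) -/
lemma mu_sq_le {α β t : ℝ} (h0 : 0 < β) (hβα : β ≤ α) (h1 : α ≤ 1 / 2) (ht : 0 ≤ t)
    (heq : β / (1 - β) * (conv cauchyDen t / phi t) = 1) (μ x : ℝ) :
    (1 - aWt cauchyDen α x) * μ ^ 2 ≤ 3 * (x - μ) ^ 2 + 3 * t ^ 2 + 48 * cE := by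
  have hα0 : 0 < α := by linarith
  have ha := aWt_nonneg good_cauchy hα0.le h1 x
  have ha1 := aWt_le_one good_cauchy hα0.le h1 x
  have hE := cE_nonneg
  set b := 1 - aWt cauchyDen α x with hb
  have hb0 : 0 ≤ b := by linarith
  have hb1 : b ≤ 1 := by linarith
  by_cases hx : |x| ≤ t
  · have h2 : x ^ 2 ≤ t ^ 2 := by rw [← sq_abs x]; gcongr
    have h3 : μ ^ 2 ≤ 3 * (x - μ) ^ 2 + 3 * t ^ 2 := by
      nlinarith [sq_nonneg (x + (x - μ)), sq_nonneg (x - μ)]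
    have : b * μ ^ 2 ≤ 1 * μ ^ 2 := by gcongr
    linarith
  · push Not at hx
    have hp := phi_pos x
    have hpt := phi_pos t
    have hc := conv_pos good_cauchy x
    have hct := conv_pos good_cauchy t
    have hb' : 0 < 1 - β := by linarith
    have ha' : 0 < 1 - α := by linarith
    have e : (1 - β) / β = conv cauchyDen t / phi t := by
      field_simp
      field_simp at heq
      linarith
    have hbound : b ≤ cE * prof (|x| - t) := by
      have s1 : b ≤ (1 - β) / β * (phi x / conv cauchyDen x) := by
        rw [hb, one_sub_aWt good_cauchy hα0.le h1]
        calc _ ≤ (1 - α) * phi x / (α * conv cauchyDen x) := by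
              gcongr
              have : 0 < (1 - α) * phi x := by positivity
              linarith
          _ = (1 - α) / α * (phi x / conv cauchyDen x) := by rw [mul_div_mul_comm]
          _ ≤ _ := by gcongr
      rw [e] at s1
      have s2 := phi_shift ht hx.le
      have s3 : conv cauchyDen t / conv cauchyDen x ≤ cE * (1 + (|x| - t) ^ 2) := by
        have q1 := cauchy_conv_le t
        have q2 := cauchy_le_conv x
        have q3 := one_add_shift t x
        have hL := cL_pos
        have hD := cD_nonneg
        rw [div_le_iff₀ hc]
        unfold cE
        have hx1 : 0 < 1 + x ^ 2 := by positivity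
        have ht1 : 0 < 1 + t ^ 2 := by positivity
        have u1 : conv cauchyDen t ≤ cD / (1 + t ^ 2) := by rw [le_div_iff₀ ht1]; exact q1
        have u2 : cD / (1 + t ^ 2) * cL ≤
            cD / (1 + t ^ 2) * (4 * (conv cauchyDen x *
              (2 * ((1 + t ^ 2) * (1 + (|x| - t) ^ 2))))) := by
          gcongr
          refine q2.trans ?_
          gcongr
        have u3 : cD / (1 + t ^ 2) * (4 * (conv cauchyDen x *
              (2 * ((1 + t ^ 2) * (1 + (|x| - t) ^ 2))))) =
            8 * (cD / cL) * (1 + (|x| - t) ^ 2) * conv cauchyDen x * cL := by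
          field_simp
          ring
        rw [u3] at u2
        exact u1.trans (le_of_mul_le_mul_right u2 hL)
      calc b ≤ _ := s1
        _ ≤ conv cauchyDen t / phi t *
            (phi t * Real.exp (-(|x| - t) ^ 2 / 2) / conv cauchyDen x) := by gcongr
        _ = conv cauchyDen t / conv cauchyDen x * Real.exp (-(|x| - t) ^ 2 / 2) := by
            field_simp
        _ ≤ cE * (1 + (|x| - t) ^ 2) * Real.exp (-(|x| - t) ^ 2 / 2) := by gcongr
        _ = _ := by unfold prof; ring
    set s := |x| - t with hs
    have hxs : |x| = t + s := by rw [hs]; ring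
    have hmu : μ ^ 2 ≤ 3 * (x - μ) ^ 2 + 3 * t ^ 2 + 3 * s ^ 2 := by
      have hx2 : x ^ 2 = (t + s) ^ 2 := by rw [← sq_abs x, hxs]
      have hm : |μ| ≤ |x - μ| + (t + s) := by
        have := abs_sub_abs_le_abs_sub μ x
        rw [abs_sub_comm] at this
        linarith
      have : μ ^ 2 ≤ (|x - μ| + (t + s)) ^ 2 := by
        rw [← sq_abs μ]; gcongr
      nlinarith [sq_abs (x - μ), sq_nonneg (|x - μ| - t), sq_nonneg (|x - μ| - s),
        sq_nonneg (t - s)]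
    have v1 : b * s ^ 2 ≤ 16 * cE := by
      calc b * s ^ 2 ≤ cE * prof s * s ^ 2 := by gcongr
        _ = cE * (s ^ 2 * prof s) := by ring
        _ ≤ cE * 16 := by
          have := sq_prof_le s
          gcongr
        _ = _ := by ring
    have v2 : b * μ ^ 2 ≤ b * (3 * (x - μ) ^ 2 + 3 * t ^ 2 + 3 * s ^ 2) := by gcongr
    have v3 : b * (3 * (x - μ) ^ 2 + 3 * t ^ 2) ≤ 1 * (3 * (x - μ) ^ 2 + 3 * t ^ 2) := by gcongr
    linarith

lemma gauss_sq (μ : ℝ) : Integrable (fun x : ℝ => (x - μ) ^ 2)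
      (ProbabilityTheory.gaussianReal μ 1) ∧
    ∫ x, (x - μ) ^ 2 ∂(ProbabilityTheory.gaussianReal μ 1) = 1 := by
  constructor
  · have h := (ProbabilityTheory.memLp_id_gaussianReal (μ := μ) (v := 1) 2).sub
      (memLp_const μ)
    exact h.integrable_sq
  · have h := ProbabilityTheory.variance_id_gaussianReal (μ := μ) (v := 1)
    rw [ProbabilityTheory.variance_eq_integral aemeasurable_id] at h
    simpa using h

lemma part4 {α β t : ℝ} (h0 : 0 < β) (hβα : β ≤ α) (h1 : α ≤ 1 / 2) (ht : 0 ≤ t)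
    (heq : β / (1 - β) * (conv cauchyDen t / phi t) = 1) (μ : ℝ) :
    (∫ x, r2 cauchyDen α μ x ∂(ProbabilityTheory.gaussianReal μ 1)) ≤
      (3 + 48 * cE + 2 * cA) * (1 + t ^ 2) := by
  have hα0 : 0 < α := by linarith
  have hA := cA_pos
  have hE := cE_nonneg
  obtain ⟨hi, hv⟩ := gauss_sq μ
  calc _ ≤ ∫ x, ((3 + cA) * (x - μ) ^ 2 + (3 * t ^ 2 + 48 * cE + cA))
        ∂(ProbabilityTheory.gaussianReal μ 1) := by
        refine integral_mono_of_nonneg (Filter.Eventually.of_forall fun x => r2_nonneg _ _ _ _)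
          ((hi.const_mul _).add (integrable_const _)) (Filter.Eventually.of_forall fun x => ?_)
        have q1 := r2_le good_cauchy hα0.le h1 μ x
        have q2 := mu_sq_le h0 hβα h1 ht heq μ x
        have q3 : cA * aWt cauchyDen α x * ((x - μ) ^ 2 + 1) ≤ cA * 1 * ((x - μ) ^ 2 + 1) := by
          have := aWt_le_one good_cauchy hα0.le h1 x
          gcongr
        show r2 cauchyDen α μ x ≤ (3 + cA) * (x - μ) ^ 2 + (3 * t ^ 2 + 48 * cE + cA)
        linarith
    _ = (3 + cA) + (3 * t ^ 2 + 48 * cE + cA) := by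
        rw [integral_add (hi.const_mul _) (integrable_const _), integral_const_mul, hv]
        simp
    _ ≤ _ := by nlinarith [mul_nonneg hE (sq_nonneg t), mul_nonneg hA.le (sq_nonneg t)]

/-- Lemma 1: fixed-`α` posterior second moment bounds.
For `γ` Cauchy or Laplace there is `C > 0` with, for all `x` and
`α ∈ [0, 1/2]`: `r₂(α,0,x) ≤ C [1 ∧ (α/(1-α)) (g/φ)(x)] (1+x²)` and
`r₂(α,μ,x) ≤ (1-a(x)) μ² + C a(x) ((x-μ)² + 1)`.  For `γ` Cauchy, in terms of
the threshold `τ(α)` (solving `(α/(1-α))(g/φ)(τ(α)) = 1`, `τ(α₀) = 1`,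
`τ̃(α) = τ(α ∧ α₀)`): `E₀ r₂(α,0,X) ≤ C τ(α) α` and
`E_μ r₂(α,μ,X) ≤ C (1 + τ̃(α)²)`. -/
theorem fixed_alpha_r2_bounds :
    ∃ C > (0 : ℝ),
      (∀ γ : ℝ → ℝ, γ = cauchyDen ∨ γ = lapDen →
        ∀ x : ℝ, ∀ α ∈ Set.Icc (0 : ℝ) (1 / 2),
          r2 γ α 0 x ≤ C * min 1 (α / (1 - α) * (conv γ x / phi x)) * (1 + x ^ 2) ∧
          ∀ μ : ℝ,
            r2 γ α μ x ≤ (1 - aWt γ α x) * μ ^ 2 + C * aWt γ α x * ((x - μ) ^ 2 + 1)) ∧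
      (∀ τ : ℝ → ℝ, ∀ α0 ∈ Set.Ioo (0 : ℝ) 1, τ α0 = 1 →
        (∀ a ∈ Set.Ioc (0 : ℝ) (max α0 (1 / 2)),
          0 ≤ τ a ∧ a / (1 - a) * (conv cauchyDen (τ a) / phi (τ a)) = 1) →
        ∀ α ∈ Set.Ioc (0 : ℝ) (1 / 2),
          (∫ x, r2 cauchyDen α 0 x ∂(ProbabilityTheory.gaussianReal 0 1)) ≤ C * τ α * α ∧
          ∀ μ : ℝ,
            (∫ x, r2 cauchyDen α μ x ∂(ProbabilityTheory.gaussianReal μ 1)) ≤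
              C * (1 + τ (min α α0) ^ 2)) := by
  have hA := cA_pos
  have hD := cD_nonneg
  have hE := cE_nonneg
  have hP : 0 ≤ 4 * cA * cD * (2 + 4 * cD) := by positivity
  have hQ : 0 ≤ 3 + 48 * cE + 2 * cA := by positivity
  set C := cA + 4 * cA * cD * (2 + 4 * cD) + (3 + 48 * cE + 2 * cA) with hC
  have hCA : cA ≤ C := by linarith
  have hCP : 4 * cA * cD * (2 + 4 * cD) ≤ C := by linarith
  have hCQ : 3 + 48 * cE + 2 * cA ≤ C := by linarith
  refine ⟨C, by linarith, ?_, ?_⟩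
  · intro γ hγ x α hα
    have hg : Good γ := by
      rcases hγ with rfl | rfl
      · exact good_cauchy
      · exact good_lap
    have ha := aWt_nonneg hg hα.1 hα.2 x
    refine ⟨(r2_zero_le hg hα.1 hα.2 x).trans ?_, fun μ => (r2_le hg hα.1 hα.2 μ x).trans ?_⟩
    · have : 0 ≤ min 1 (α / (1 - α) * (conv γ x / phi x)) :=
        le_min zero_le_one (ha.trans (aWt_le hg hα.1 hα.2 x))
      gcongr
    · gcongr
  · intro τ α0 hα0 _ hτ α hα
    constructor
    · obtain ⟨ht, heq⟩ := hτ α ⟨hα.1, hα.2.trans (le_max_right _ _)⟩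
      refine (part3 hα.1 hα.2 ht heq).trans ?_
      have := hα.1
      gcongr
    · intro μ
      obtain ⟨ht, heq⟩ := hτ (min α α0)
        ⟨lt_min hα.1 hα0.1, (min_le_right _ _).trans (le_max_left _ _)⟩
      refine (part4 (lt_min hα.1 hα0.1) (min_le_left _ _) hα.2 ht heq μ).trans ?_
      gcongr


end
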